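/- Let R be an alternative ring in which 2 is invertible, and let t1, t2, t3 ∈ R satisfy the Cayley relations. Then for each u ∈ {t1, t2, t3} the square u*u commutes with t1, t2, t3 (i.e. [u*u, ti] = 0 for i = 1,2,3) and associates with them (i.e. the associator (u*u, ti, tj) = 0 for all i, j ∈ {1,2,3}). -/

import Mathlib

/-!
The associator `(a, b, c)` of an alternative ring is an alternating function of its arguments.
Combining this with the Teichmüller identity gives `(x², y, z) = x (x, y, z) + (x, y, z) x`
(`associator_sq`), so `(x², y, z)` vanishes whenever two of `x, y, z` coincide.

If `u, v, w` satisfy the Cayley relations, then `(u, v, w) = -2 u (v w)`, and the alternating law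
turns the other products into `± u (v w)`. In particular the relations are invariant under cyclic
permutation, and `u` anticommutes with `v w`, hence with `u (v w)` and with `(u, v, w)`; so
`(u², v, w) = 0` (`associator_sq_eq_zero_of_cayley`).

Commutation of `u²` with `v` only uses that `u` and `v` anticommute, together with the flexible law.
-/

namespace AlternativeRing

variable {R : Type*} [NonAssocRing R]

theorem associator_swap_left (alt_left : ∀ a b : R, (a * a) * b = a * (a * b)) (a b c : R) :
    associator b a c = -associator a b c := by
  have h := alt_left (a + b) c
  simp only [add_mul, mul_add, alt_left] at h
  simp only [associator_apply]
  rw [← sub_eq_zero] at h ⊢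
  rw [← h]
  abel

theorem associator_swap_right (alt_right : ∀ a b : R, (b * a) * a = b * (a * a)) (a b c : R) :
    associator a c b = -associator a b c := by
  have h := alt_right (b + c) a
  simp only [add_mul, mul_add, alt_right] at h
  simp only [associator_apply]
  rw [← sub_eq_zero] at h ⊢
  rw [← h]
  abel

theorem flexible (alt_left : ∀ a b : R, (a * a) * b = a * (a * b))
    (alt_right : ∀ a b : R, (b * a) * a = b * (a * a)) (a b : R) :
    (a * b) * a = a * (b * a) := by
  have h := associator_swap_left alt_left b a a
  simp only [associator_apply, alt_right, sub_self, neg_zero] at h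
  exact sub_eq_zero.mp h

/-- The Teichmüller identity, valid in every nonassociative ring. -/
theorem teichmuller (a b c d : R) :
    associator (a * b) c d - associator a (b * c) d + associator a b (c * d)
      = a * associator b c d + associator a b c * d := by
  simp only [associator_apply, mul_sub, sub_mul]
  abel

theorem associator_sq (alt_left : ∀ a b : R, (a * a) * b = a * (a * b))
    (alt_right : ∀ a b : R, (b * a) * a = b * (a * a)) (x y z : R) :
    associator (x * x) y z = x * associator x y z + associator x y z * x := by
  have sl := associator_swap_left alt_left
  have sr := associator_swap_right alt_right
  have left_self (a b : R) : associator a a b = 0 := by simp [associator_apply, alt_left]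
  have right_self (a b : R) : associator b a a = 0 := by simp [associator_apply, alt_right]
  -- both Teichmüller identities below evaluate `(x², y, z) - (x, y x, z)`
  have key (y z : R) : associator x y (x * z) = associator x y z * x := by
    have h1 := teichmuller y x x z
    have h2 := teichmuller z y x x
    rw [left_self, right_self, mul_zero, zero_mul, sl x (y * x) z, sl (x * x) y z,
      sl x y (x * z)] at h1
    have e1 : associator z (y * x) x = -associator x (y * x) z := by
      rw [sl (y * x) z x, sr (y * x) x z, sl x (y * x) z]; abel
    have e2 : associator z y (x * x) = -associator (x * x) y z := by
      rw [sl y z (x * x), sr y (x * x) z, sl (x * x) y z]; abel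
    have e3 : associator z y x = -associator x y z := by
      rw [sl y z x, sr y x z, sl x y z]; abel
    rw [right_self, right_self, mul_zero, e1, e2, e3, neg_mul] at h2
    grind
  have h := teichmuller x x y z
  rw [left_self, left_self, zero_mul, sr x z (x * y), key z y, sr x y z, neg_mul] at h
  grind

/-- The alternating law for `(v, u, w)` and `(v, w, u)` turns `(u, v, w) = -2 u (v w)` into these
values. Together they give `(v w) u = -(v (w u))`, the Cayley relation permuted cyclically. -/
theorem cayley_products (alt_left : ∀ a b : R, (a * a) * b = a * (a * b))
    (alt_right : ∀ a b : R, (b * a) * a = b * (a * a))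
    {u v w : R} (hvu : v * u = -(u * v)) (hwu : w * u = -(u * w))
    (h : (u * v) * w = -(u * (v * w))) :
    v * (w * u) = u * (v * w) ∧ (v * w) * u = -(u * (v * w)) := by
  have h1 := associator_swap_left alt_left u v w
  have h2 := associator_swap_right alt_right v u w
  simp only [associator_apply, hvu, hwu, neg_mul, mul_neg, h] at h1 h2 ⊢
  grind

theorem associator_sq_eq_zero_of_cayley (alt_left : ∀ a b : R, (a * a) * b = a * (a * b))
    (alt_right : ∀ a b : R, (b * a) * a = b * (a * a))
    {u v w : R} (hvu : v * u = -(u * v)) (hwu : w * u = -(u * w))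
    (h : (u * v) * w = -(u * (v * w))) :
    associator (u * u) v w = 0 := by
  obtain ⟨-, hc⟩ := cayley_products alt_left alt_right hvu hwu h
  have hf := flexible alt_left alt_right u (v * w)
  rw [hc, mul_neg] at hf
  rw [associator_sq alt_left alt_right, associator_apply, h, mul_sub, sub_mul, mul_neg, neg_mul, hf]
  abel

theorem sq_mul_comm_of_anticomm (alt_left : ∀ a b : R, (a * a) * b = a * (a * b))
    (alt_right : ∀ a b : R, (b * a) * a = b * (a * a)) {u v : R} (hvu : v * u = -(u * v)) :
    (u * u) * v = v * (u * u) := by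
  rw [alt_left, ← alt_right, hvu, neg_mul, flexible alt_left alt_right, hvu, mul_neg, neg_neg]

end AlternativeRing

open AlternativeRing in

/-- In an alternative ring in which 2 is invertible, if
`t 0, t 1, t 2` satisfy the Cayley relations, then each square `t i * t i`
commutes with all the generators (commutator vanishes) and associates with
them (associator vanishes). -/
theorem cayley_squares_commute_associate (R : Type*) [NonAssocRing R] [Invertible (2 : R)]
    (alt_left : ∀ a b : R, (a * a) * b = a * (a * b))
    (alt_right : ∀ a b : R, (b * a) * a = b * (a * a))
    (t : Fin 3 → R)
    (h21 : t 1 * t 0 = -(t 0 * t 1))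
    (h31 : t 2 * t 0 = -(t 0 * t 2))
    (h32 : t 2 * t 1 = -(t 1 * t 2))
    (h123 : (t 0 * t 1) * t 2 = -(t 0 * (t 1 * t 2))) :
    ∀ i j k : Fin 3,
      (t i * t i) * t j - t j * (t i * t i) = 0 ∧
      ((t i * t i) * t j) * t k - (t i * t i) * (t j * t k) = 0 := by
  have anti {a b : R} (hab : a * b = -(b * a)) : b * a = -(a * b) := by rw [hab, neg_neg]
  -- the Cayley relation is invariant under cyclic permutation
  have h231 : (t 1 * t 2) * t 0 = -(t 1 * (t 2 * t 0)) := by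
    obtain ⟨e, f⟩ := cayley_products alt_left alt_right h21 h31 h123
    rw [e, f]
  have h312 : (t 2 * t 0) * t 1 = -(t 2 * (t 0 * t 1)) := by
    obtain ⟨e, f⟩ := cayley_products alt_left alt_right h32 (anti h21) h231
    rw [e, f]
  have a012 := associator_sq_eq_zero_of_cayley alt_left alt_right h21 h31 h123
  have a120 := associator_sq_eq_zero_of_cayley alt_left alt_right h32 (anti h21) h231
  have a201 := associator_sq_eq_zero_of_cayley alt_left alt_right (anti h31) (anti h32) h312
  have sr := associator_swap_right alt_right
  have a021 : associator (t 0 * t 0) (t 2) (t 1) = 0 := by rw [sr, a012, neg_zero]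
  have a102 : associator (t 1 * t 1) (t 0) (t 2) = 0 := by rw [sr, a120, neg_zero]
  have a210 : associator (t 2 * t 2) (t 1) (t 0) = 0 := by rw [sr, a201, neg_zero]
  have same (u v : R) : associator (u * u) v v = 0 := by
    rw [associator_apply, alt_right, sub_self]
  have rep (u v : R) : associator (u * u) u v = 0 := by
    simp [associator_sq alt_left alt_right, associator_apply, alt_left]
  have rep' (u v : R) : associator (u * u) v u = 0 := by rw [sr, rep, neg_zero]
  intro i j k
  constructor
  · rw [sub_eq_zero]
    by_cases hij : i = j
    · subst hij
      rw [alt_left]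
    · apply sq_mul_comm_of_anticomm alt_left alt_right
      fin_cases i <;> fin_cases j <;>
        first | exact absurd rfl hij | assumption | exact anti (by assumption)
  · rw [← associator_apply]
    fin_cases i <;> fin_cases j <;> fin_cases k <;>
      first | exact same _ _ | exact rep _ _ | exact rep' _ _ | assumption
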